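/- Let n and k be integers with ⌊n/2⌋ + 1 ≤ k ≤ n − 1, and let G be any clique tree on n vertices with zero forcing number k in which every block has at least 3 vertices. Then ρ(G) ≤ ρ(𝒢(n,k)), and equality holds if and only if G is isomorphic to 𝒢(n,k). -/

import Mathlib

open Classical

/-- The set of vertices eventually forced blue, starting from the blue set `S`,
under the color-change rule: a blue vertex with exactly one non-blue neighbor
forces that neighbor. -/
inductive SimpleGraph.Forced {V : Type*} (G : SimpleGraph V) (S : Set V) : V → Prop
  | init (v : V) (hv : v ∈ S) : SimpleGraph.Forced G S v
  | force (u w : V) (hu : SimpleGraph.Forced G S u) (hadj : G.Adj u w)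
      (hothers : ∀ y, G.Adj u y → y ≠ w → SimpleGraph.Forced G S y) :
      SimpleGraph.Forced G S w

/-- `S` is a zero forcing set of `G` if starting from `S` blue, every vertex
eventually becomes blue. -/
def SimpleGraph.IsZeroForcingSet {V : Type*} (G : SimpleGraph V) (S : Set V) : Prop :=
  ∀ v, G.Forced S v

/-- The zero forcing number `Z(G)`: the least size of a zero forcing set. -/
noncomputable def SimpleGraph.zeroForcingNumber {V : Type*} (G : SimpleGraph V) : ℕ :=
  sInf {n | ∃ S : Set V, S.ncard = n ∧ G.IsZeroForcingSet S}

/-- The induced subgraph of `G` on `B` is connected and has no cut vertex. -/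
def SimpleGraph.IsConnectedNoCutVertexSet {V : Type*} (G : SimpleGraph V) (B : Set V) : Prop :=
  (G.induce B).Connected ∧ ∀ v ∈ B, B \ {v} = ∅ ∨ (G.induce (B \ {v})).Connected

/-- `B` is (the vertex set of) a block of `G`: a maximal connected subgraph
without cut vertices. -/
def SimpleGraph.IsBlock {V : Type*} (G : SimpleGraph V) (B : Set V) : Prop :=
  G.IsConnectedNoCutVertexSet B ∧
    ∀ C, B ⊆ C → G.IsConnectedNoCutVertexSet C → B = C

/-- `v` is a cut vertex of `G`: `G` is connected but `G - v` is not. -/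
def SimpleGraph.IsCutVertex {V : Type*} (G : SimpleGraph V) (v : V) : Prop :=
  G.Connected ∧ ¬ (G.induce ({v}ᶜ : Set V)).Connected

/-- A clique tree: a connected graph each of whose blocks is a clique. -/
def SimpleGraph.IsCliqueTree {V : Type*} (G : SimpleGraph V) : Prop :=
  G.Connected ∧ ∀ B : Set V, G.IsBlock B → G.IsClique B

/-- The real adjacency matrix of a graph. -/
noncomputable def SimpleGraph.adjMatR {V : Type*} [Fintype V] (G : SimpleGraph V) :
    Matrix V V ℝ :=
  Matrix.of fun i j => if G.Adj i j then (1 : ℝ) else 0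

/-- The spectral radius of a (connected) graph: the largest real eigenvalue of
its adjacency matrix. -/
noncomputable def SimpleGraph.specRad {V : Type*} [Fintype V] (G : SimpleGraph V) : ℝ :=
  sSup {t : ℝ | ∃ x : V → ℝ, x ≠ 0 ∧ G.adjMatR.mulVec x = t • x}

/-- The clique tree `𝒢(n,k)` on vertex set `Fin n`: one block `K_{2k-n+2}`
(on the vertices `0, 1, …, 2k-n+1`) and `n-k-1` triangle blocks (on the vertex
`0` together with the pairs `{2k-n+2i, 2k-n+1+2i}` for `1 ≤ i ≤ n-k-1`), all
sharing the single central cut vertex `0`. -/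
def calG (n k : ℕ) : SimpleGraph (Fin n) :=
  SimpleGraph.fromRel (fun i j =>
    (i.val = 0 ∨ j.val = 0) ∨
    (i.val ≤ 2 * k - n + 1 ∧ j.val ≤ 2 * k - n + 1) ∨
    (2 * k - n + 1 < i.val ∧ 2 * k - n + 1 < j.val ∧
      (i.val - (2 * k - n + 2)) / 2 = (j.val - (2 * k - n + 2)) / 2))

namespace SimpleGraph

section CliqueTree

variable {V : Type*} {G : SimpleGraph V}

/-- A path whose ends are adjacent spans a connected set without cut vertices. -/
lemma Walk.IsPath.isConnectedNoCutVertexSet_support {p a : V} {w : G.Walk p a}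
    (hw : w.IsPath) (hpa : G.Adj p a) :
    G.IsConnectedNoCutVertexSet {x | x ∈ w.support} := by
  refine ⟨w.connected_induce_support, fun v hv => Or.inr ?_⟩
  have avoid : ∀ x (hx : x ∈ w.support), x ≠ v →
      v ∉ (w.takeUntil x hx).support ∨ v ∉ (w.dropUntil x hx).support := by
    intro x hx hxv
    by_contra! h
    have hnd := hw.support_nodup
    rw [← w.take_spec hx, Walk.support_append] at hnd
    have h2 := h.2
    rw [Walk.mem_support_iff] at h2
    exact (List.nodup_append.1 hnd).2.2 v h.1 v (h2.resolve_left hxv.symm) rfl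
  have reach : ∀ {x y : V} (q : G.Walk x y), (∀ z ∈ q.support, z ∈ w.support) →
      v ∉ q.support → ∃ s' ⊆ {x | x ∈ w.support} \ {v}, ∃ (hx : x ∈ s') (hy : y ∈ s'),
        (G.induce s').Reachable ⟨x, hx⟩ ⟨y, hy⟩ := by
    intro x y q hq hvq
    exact ⟨{z | z ∈ q.support}, fun z hz => ⟨hq z hz, by rintro rfl; exact hvq hz⟩,
      q.start_mem_support, q.end_mem_support, q.connected_induce_support.preconnected _ _⟩
  by_cases hvp : v = p
  · subst hvp
    refine G.induce_connected_of_patches a ⟨w.end_mem_support, hpa.ne'⟩ fun {x} hx => ?_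
    have hxv : x ≠ v := hx.2
    refine reach (w.dropUntil x hx.1).reverse (fun z hz => ?_) ?_
    · exact w.support_dropUntil_subset_support hx.1 (by simpa using hz)
    · have := (avoid x hx.1 hxv).resolve_left (by simp)
      simpa using this
  · refine G.induce_connected_of_patches p ⟨w.start_mem_support, Ne.symm hvp⟩ fun {x} hx => ?_
    have hxv : x ≠ v := hx.2
    rcases avoid x hx.1 hxv with h | h
    · exact reach (w.takeUntil x hx.1)
        (fun z hz => w.support_takeUntil_subset_support hx.1 hz) h
    · refine reach (Walk.cons hpa (w.dropUntil x hx.1).reverse) (fun z hz => ?_) ?_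
      · rcases (by simpa using hz : z = p ∨ z ∈ (w.dropUntil x hx.1).support) with rfl | hz
        · exact w.start_mem_support
        · exact w.support_dropUntil_subset_support hx.1 hz
      · simp [hvp, h]

lemma IsConnectedNoCutVertexSet.exists_isBlock [Finite V] {C : Set V}
    (hC : G.IsConnectedNoCutVertexSet C) : ∃ B, C ⊆ B ∧ G.IsBlock B := by
  obtain ⟨B, hCB, hB⟩ := Finite.exists_le_maximal (p := G.IsConnectedNoCutVertexSet) hC
  exact ⟨B, hCB, hB.prop, fun D hBD hD => hB.eq_of_le hD hBD⟩

lemma IsCliqueTree.isClique_support [Finite V] (hG : G.IsCliqueTree) {p a : V} {w : G.Walk p a}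
    (hw : w.IsPath) (hpa : G.Adj p a) : G.IsClique {x | x ∈ w.support} := by
  obtain ⟨B, hCB, hB⟩ := (hw.isConnectedNoCutVertexSet_support hpa).exists_isBlock
  exact (hG.2 B hB).subset hCB

lemma IsCliqueTree.exists_common_neighbor [Finite V] (hG : G.IsCliqueTree)
    (hsize : ∀ B : Set V, G.IsBlock B → 3 ≤ B.ncard) {p a : V} (hpa : G.Adj p a) :
    ∃ c, G.Adj p c ∧ G.Adj a c := by
  have hw : (Walk.cons hpa Walk.nil).IsPath := by simp [hpa.ne]
  obtain ⟨B, hCB, hB⟩ := (hw.isConnectedNoCutVertexSet_support hpa).exists_isBlock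
  have hp : p ∈ B := hCB (by simp)
  have ha : a ∈ B := hCB (by simp)
  obtain ⟨c, hc, hc'⟩ : ∃ c ∈ B, c ∉ ({p, a} : Set V) := by
    refine Set.exists_mem_notMem_of_ncard_lt_ncard ?_ (Set.toFinite _)
    exact lt_of_le_of_lt (Set.ncard_pair hpa.ne).le (hsize B hB)
  simp only [Set.mem_insert_iff, Set.mem_singleton_iff, not_or] at hc'
  exact ⟨c, hG.2 B hB hp hc (Ne.symm hc'.1), hG.2 B hB ha hc (Ne.symm hc'.2)⟩

/-- A vertex other than the root has a neighbor closer to the root. -/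
lemma Connected.exists_adj_dist_add_one (hG : G.Connected) {u a : V} (ha : a ≠ u) :
    ∃ p, G.Adj p a ∧ G.dist p u + 1 = G.dist a u := by
  obtain ⟨w, hw⟩ := hG.exists_walk_length_eq_dist a u
  cases w with
  | nil => exact absurd rfl ha
  | cons h q =>
    rename_i p
    refine ⟨p, h.symm, ?_⟩
    have h1 := dist_le q
    have h2 : G.dist a u ≤ G.dist p u + 1 := by
      have := hG.dist_triangle (u := a) (v := p) (w := u)
      rw [dist_eq_one_iff_adj.2 h] at this
      omega
    simp only [Walk.length_cons] at hw
    omega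

lemma Connected.dist_le_dist_add_one (hG : G.Connected) {u a b : V} (h : G.Adj a b) :
    G.dist a u ≤ G.dist b u + 1 := by
  have := hG.dist_triangle (u := a) (v := b) (w := u)
  rw [dist_eq_one_iff_adj.2 h] at this
  omega

/-- Two vertices are joined by a path that gets no farther from the root than its ends. -/
lemma Connected.exists_isPath_dist_le (hG : G.Connected) (u : V) {p q : V} {d : ℕ}
    (hp : G.dist p u ≤ d) (hq : G.dist q u ≤ d) :
    ∃ w : G.Walk p q, w.IsPath ∧ ∀ x ∈ w.support, G.dist x u ≤ d := by
  have key : ∀ {p : V}, G.dist p u ≤ d → ∃ w : G.Walk p u, ∀ x ∈ w.support, G.dist x u ≤ d := by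
    intro p hp
    obtain ⟨w, hw⟩ := hG.exists_walk_length_eq_dist p u
    refine ⟨w, fun x hx => ?_⟩
    have h1 := dist_le (w.dropUntil x hx)
    have h2 := w.length_dropUntil_le_length hx
    omega
  obtain ⟨w₁, h₁⟩ := key hp
  obtain ⟨w₂, h₂⟩ := key hq
  refine ⟨(w₁.append w₂.reverse).bypass, Walk.bypass_isPath _, fun x hx => ?_⟩
  have := Walk.support_bypass_subset_support _ hx
  rw [Walk.mem_support_append_iff, Walk.support_reverse, List.mem_reverse] at this
  exact this.elim (h₁ x) (h₂ x)

/-- In a clique tree, equal or adjacent vertices at the same distance from the root have the same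
neighbors one step closer to the root. -/
lemma IsCliqueTree.eq_of_adj_of_dist [Finite V] (hG : G.IsCliqueTree) {u a b p q : V}
    (hab : a = b ∨ G.Adj a b) (hd : G.dist a u = G.dist b u)
    (hp : G.Adj p a) (hpd : G.dist p u + 1 = G.dist a u)
    (hq : G.Adj q b) (hqd : G.dist q u + 1 = G.dist b u) : p = q := by
  by_contra hpq
  have hne : ∀ x y : V, G.dist x u ≠ G.dist y u → x ≠ y := fun x y h e => h (e ▸ rfl)
  have hpu : p ≠ u := by
    rintro rfl
    have hq0 : G.dist q p = 0 := by simp at hpd; omega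
    exact hpq (hG.1.dist_eq_zero_iff.1 hq0).symm
  have hqu : q ≠ u := by
    rintro rfl
    have hp0 : G.dist p q = 0 := by simp at hqd; omega
    exact hpq (hG.1.dist_eq_zero_iff.1 hp0)
  obtain ⟨p', hp', hpd'⟩ := hG.1.exists_adj_dist_add_one hpu
  obtain ⟨q', hq', hqd'⟩ := hG.1.exists_adj_dist_add_one hqu
  obtain ⟨w, hw, hwd⟩ := hG.1.exists_isPath_dist_le u (p := p') (q := q') (d := G.dist p' u)
    le_rfl (by omega)
  have hw₁ : ((Walk.cons hp'.symm w).concat hq').IsPath := by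
    refine Walk.IsPath.concat (hw.cons fun h => ?_) (fun h => ?_) _
    · have := hwd _ h; omega
    · rcases (by simpa using h : q = p ∨ q ∈ w.support) with h | h
      · exact hpq h.symm
      · have := hwd _ h; omega
  have hd₁ : ∀ x ∈ ((Walk.cons hp'.symm w).concat hq').support, G.dist x u < G.dist a u := by
    intro x hx
    rcases (by simpa [Walk.support_concat] using hx : x = p ∨ x ∈ w.support ∨ x = q)
      with rfl | h | rfl
    · omega
    · have := hwd _ h; omega
    · omega
  have hp'a : ¬ G.Adj a p' := fun h => by
    have := hG.1.dist_le_dist_add_one (u := u) h; omega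
  have hap' : a ≠ p' := hne _ _ (by omega)
  have hw₂ : (((Walk.cons hp'.symm w).concat hq').concat hq).IsPath :=
    hw₁.concat (fun h => by have := hd₁ _ h; omega) _
  rcases hab with rfl | hab
  · refine hp'a (hG.isClique_support hw₂ hp ?_ ?_ hap') <;> simp [Walk.support_concat]
  · refine hp'a (hG.isClique_support (hw₂.concat (w := a) ?_ hab.symm) hp ?_ ?_ hap')
    · intro h
      rw [Walk.support_concat] at h
      rcases List.mem_append.1 h with h | h
      · have := hd₁ _ h; omega
      · exact hab.ne (by simpa using h)
    all_goals simp [Walk.support_concat]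

/-- A decomposition of a graph with root `u` into cliques, each of which consists of a parent vertex
and a class of at least two vertices below it. -/
structure RootedCliques (G : SimpleGraph V) (u : V) where
  cls : V → Set V
  par : V → V
  adj_cases : ∀ {a b}, G.Adj a b → cls a = cls b ∨ (b ≠ u ∧ par b = a) ∨ (a ≠ u ∧ par a = b)
  ne_root : ∀ {a b}, cls a = cls b → a ≠ b → a ≠ u
  adj_of_cls_eq : ∀ {a b}, cls a = cls b → a ≠ b → G.Adj a b
  par_congr : ∀ {a b}, cls a = cls b → par a = par b
  par_adj : ∀ {a}, a ≠ u → G.Adj (par a) a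
  par_eq_root : ∀ {a}, G.Adj u a → par a = u
  exists_twin : ∀ {a}, a ≠ u → ∃ b, b ≠ a ∧ cls b = cls a

theorem IsCliqueTree.nonempty_rootedCliques [Finite V] (hG : G.IsCliqueTree)
    (hsize : ∀ B : Set V, G.IsBlock B → 3 ≤ B.ncard) (u : V) : Nonempty (G.RootedCliques u) := by
  have hex : ∀ a, ∃ p, a ≠ u → G.Adj p a ∧ G.dist p u + 1 = G.dist a u := fun a => by
    by_cases ha : a = u
    · exact ⟨u, fun h => absurd ha h⟩
    · obtain ⟨p, hp⟩ := hG.1.exists_adj_dist_add_one ha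
      exact ⟨p, fun _ => hp⟩
  choose par hpar using hex
  have hpos : ∀ a, a ≠ u ↔ 0 < G.dist a u := fun a => by
    rw [Nat.pos_iff_ne_zero, Ne, Ne, hG.1.dist_eq_zero_iff]
  have huniq : ∀ {a p}, G.Adj p a → G.dist p u + 1 = G.dist a u → par a = p := fun {a p} h hd => by
    have ha := hpar a ((hpos a).2 (by omega))
    exact hG.eq_of_adj_of_dist (Or.inl rfl) rfl ha.1 ha.2 h hd
  have hparEq : ∀ {a b}, G.Adj a b → G.dist a u = G.dist b u → a ≠ u → par a = par b :=
    fun {a b} h hd ha => by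
      have ha' := hpar a ha
      have hb' := hpar b ((hpos b).2 (hd ▸ (hpos a).1 ha))
      exact hG.eq_of_adj_of_dist (Or.inr h) hd ha'.1 ha'.2 hb'.1 hb'.2
  have hroot : ∀ {a b}, G.dist a u = G.dist b u → a ≠ b → a ≠ u := fun {a b} hd hab => by
    rintro rfl
    rw [dist_self] at hd
    exact hab (hG.1.dist_eq_zero_iff.1 hd.symm).symm
  have htrans : ∀ {a b c}, G.Adj a b → G.dist a u = G.dist b u → G.Adj b c →
      G.dist b u = G.dist c u → a ≠ c → G.Adj a c := fun {a b c} hab hd hbc hd' hac => by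
    have ha := hroot hd hab.ne
    have hb := hroot hd' hbc.ne
    have hc := hroot hd'.symm hbc.ne'
    have pa := hpar a ha
    have pc := hpar c hc
    rw [← hparEq hbc hd' hb, ← hparEq hab hd ha] at pc
    have hw : (Walk.cons hab (Walk.cons hbc (Walk.cons pc.1.symm Walk.nil))).IsPath := by
      have h1 : a ≠ par a := pa.1.ne'
      have h3 : c ≠ par a := pc.1.ne'
      have h2 : b ≠ par a := fun e => by
        have := pa.2; rw [← e] at this; omega
      simp [hab.ne, hac, hbc.ne, h1, h2, h3]
    exact hG.isClique_support hw pa.1.symm (by simp) (by simp) hac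
  let cls : V → Set V := fun a => {x | G.dist x u = G.dist a u ∧ (x = a ∨ G.Adj x a)}
  have hcls : ∀ {a b}, cls a = cls b ↔ G.dist a u = G.dist b u ∧ (a = b ∨ G.Adj a b) := by
    intro a b
    constructor
    · intro h
      have : a ∈ cls a := ⟨rfl, Or.inl rfl⟩
      rw [h] at this
      exact this
    · have key : ∀ {a b}, G.dist a u = G.dist b u → G.Adj a b → cls a ⊆ cls b := by
        rintro a b hd h x ⟨hx, rfl | hxa⟩
        · exact ⟨hd, Or.inr h⟩
        · refine ⟨hx.trans hd, ?_⟩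
          by_cases hxb : x = b
          · exact Or.inl hxb
          · exact Or.inr (htrans hxa hx h hd hxb)
      rintro ⟨hd, rfl | h⟩
      · rfl
      · exact (key hd h).antisymm (key hd.symm h.symm)
  refine ⟨⟨cls, par, ?_, ?_, ?_, ?_, fun ha => (hpar _ ha).1, ?_, ?_⟩⟩
  · intro a b h
    have h1 := hG.1.dist_le_dist_add_one (u := u) h
    have h2 := hG.1.dist_le_dist_add_one (u := u) h.symm
    rcases lt_trichotomy (G.dist a u) (G.dist b u) with hd | hd | hd
    · exact Or.inr (Or.inl ⟨(hpos b).2 (by omega), huniq h (by omega)⟩)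
    · exact Or.inl (hcls.2 ⟨hd, Or.inr h⟩)
    · exact Or.inr (Or.inr ⟨(hpos a).2 (by omega), huniq h.symm (by omega)⟩)
  · intro a b h hab
    exact hroot (hcls.1 h).1 hab
  · intro a b h hab
    exact (hcls.1 h).2.resolve_left hab
  · intro a b h
    rcases (hcls.1 h).2 with rfl | h'
    · rfl
    · exact hparEq h' (hcls.1 h).1 (hroot (hcls.1 h).1 h'.ne)
  · intro a h
    refine huniq h ?_
    rw [dist_self, dist_eq_one_iff_adj.2 h.symm]
  · intro a ha
    obtain ⟨hp, hpd⟩ := hpar a ha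
    obtain ⟨c, hpc, hac⟩ := hG.exists_common_neighbor hsize hp
    have h1 := hG.1.dist_le_dist_add_one (u := u) hac
    have h2 := hG.1.dist_le_dist_add_one (u := u) hac.symm
    have h3 := hG.1.dist_le_dist_add_one (u := u) hpc.symm
    refine ⟨c, hac.ne', hcls.2 ⟨?_, Or.inr hac.symm⟩⟩
    by_contra hd
    have := huniq hac.symm (by omega)
    exact hpc.ne this

/-- If `u` is adjacent to all other vertices, then `G` is a windmill centered at `u`. -/
lemma RootedCliques.adj_iff (R : G.RootedCliques u) (hu : ∀ v, v ≠ u → G.Adj u v) (a b : V) :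
    G.Adj a b ↔ a ≠ b ∧ (a = u ∨ b = u ∨ R.cls a = R.cls b) := by
  constructor
  · intro h
    refine ⟨h.ne, ?_⟩
    rcases R.adj_cases h with h | ⟨hb, rfl⟩ | ⟨ha, rfl⟩
    · exact Or.inr (Or.inr h)
    · exact Or.inl (R.par_eq_root (hu b hb))
    · exact Or.inr (Or.inl (R.par_eq_root (hu a ha)))
  · rintro ⟨hab, rfl | rfl | h⟩
    · exact hu b hab.symm
    · exact (hu a hab).symm
    · exact R.adj_of_cls_eq h hab

end CliqueTree

section ZeroForcing

variable {V : Type*} (G : SimpleGraph V)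

/-- The vertices that are blue after `t` rounds of simultaneous forcing from `S`. -/
def forcingStage (S : Set V) : ℕ → Set V
  | 0 => S
  | t + 1 => forcingStage S t ∪
      {w | ∃ u ∈ forcingStage S t, G.Adj u w ∧ ∀ y, G.Adj u y → y ≠ w → y ∈ forcingStage S t}

lemma forcingStage_mono (S : Set V) : Monotone (G.forcingStage S) :=
  monotone_nat_of_le_succ fun _ => Set.subset_union_left

variable {G}

lemma Forced.exists_mem_forcingStage [Finite V] {S : Set V} {v : V} (h : G.Forced S v) :
    ∃ t, v ∈ G.forcingStage S t := by
  induction h with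
  | init v hv => exact ⟨0, hv⟩
  | force u w _ hadj _ hu hy =>
    obtain ⟨t₀, ht₀⟩ := hu
    have hex : ∀ y, ∃ t, G.Adj u y → y ≠ w → y ∈ G.forcingStage S t := fun y => by
      by_cases h : G.Adj u y ∧ y ≠ w
      · obtain ⟨t, ht⟩ := hy y h.1 h.2
        exact ⟨t, fun _ _ => ht⟩
      · exact ⟨0, fun h1 h2 => absurd ⟨h1, h2⟩ h⟩
    choose t ht using hex
    obtain ⟨T, hT⟩ := (Set.finite_range t).bddAbove
    refine ⟨max t₀ T + 1, Or.inr ⟨u, G.forcingStage_mono S (le_max_left _ _) ht₀, hadj,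
      fun y h1 h2 => ?_⟩⟩
    exact G.forcingStage_mono S ((hT ⟨y, rfl⟩).trans (le_max_right _ _)) (ht y h1 h2)

/-- Every vertex outside a zero forcing set is forced by a neighbor, at a time when that neighbor
and all its other neighbors are already blue. -/
lemma IsZeroForcingSet.exists_time [Finite V] {S : Set V} (hS : G.IsZeroForcingSet S) :
    ∃ t : V → ℕ, ∀ w ∉ S, ∃ u, G.Adj u w ∧ t u < t w ∧ ∀ y, G.Adj u y → y ≠ w → t y < t w := by
  have hex := fun v => (hS v).exists_mem_forcingStage
  refine ⟨fun v => Nat.find (hex v), fun w hw => ?_⟩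
  have hspec := Nat.find_spec (hex w)
  obtain ⟨m, hm⟩ : ∃ m, Nat.find (hex w) = m + 1 := by
    refine Nat.exists_eq_succ_of_ne_zero fun h => ?_
    rw [h] at hspec
    exact hw hspec
  rw [hm] at hspec
  rcases hspec with h | ⟨u, hu, huw, hy⟩
  · exact absurd h (Nat.find_min (hex w) (by omega))
  · refine ⟨u, huw, ?_, fun y h1 h2 => ?_⟩
    · have := Nat.find_min' (hex u) hu
      change Nat.find _ < Nat.find _
      omega
    · have := Nat.find_min' (hex y) (hy y h1 h2)
      change Nat.find _ < Nat.find _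
      omega

/-- If the edges of `G` are covered by a family of cliques, then each of them is used for at most
one force. -/
lemma IsZeroForcingSet.card_le_ncard_add_card [Fintype V] {S : Set V}
    (hS : G.IsZeroForcingSet S) {ι : Type*} (s : Finset ι) (B : ι → Set V)
    (hB : ∀ i ∈ s, G.IsClique (B i)) (hcov : ∀ a b, G.Adj a b → ∃ i ∈ s, a ∈ B i ∧ b ∈ B i) :
    Fintype.card V ≤ S.ncard + s.card := by
  obtain ⟨t, ht⟩ := hS.exists_time
  have hex : ∀ w : (Sᶜ : Set V), ∃ i : s, ↑w ∈ B i ∧ ∃ u ∈ B i, t u < t w ∧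
      ∀ y, G.Adj u y → y ≠ w → t y < t w := fun ⟨w, hw⟩ => by
    obtain ⟨u, h1, h2, h3⟩ := ht w hw
    obtain ⟨i, hi, hu, hwi⟩ := hcov u w h1
    exact ⟨⟨i, hi⟩, hwi, u, hu, h2, h3⟩
  choose f hf u hu hlt hothers using hex
  have key : ∀ w w', f w = f w' → t w ≤ t w' → w = w' := by
    intro w w' hff hle
    by_contra hne
    have hne' : (w' : V) ≠ w := fun h => hne (Subtype.ext h.symm)
    have hw' := hf w'
    rw [← hff] at hw'
    by_cases h : u w = w'
    · have := hlt w
      rw [h] at this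
      omega
    · have := hothers w w' (hB _ (f w).2 (hu w) hw' h) hne'
      omega
  have hinj : Function.Injective f := fun w w' h =>
    (le_total (t w) (t w')).elim (key w w' h) fun hle => (key w' w h.symm hle).symm
  have h1 := Nat.card_le_card_of_injective f hinj
  have h2 := Set.ncard_add_ncard_compl S
  rw [Nat.card_coe_set_eq, Nat.card_eq_fintype_card, Fintype.card_coe] at h1
  rw [Nat.card_eq_fintype_card] at h2
  omega

end ZeroForcing

section SpectralRadius

variable {V : Type*} [Fintype V] (G : SimpleGraph V)

lemma adjMatR_mulVec (x : V → ℝ) (a : V) :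
    (G.adjMatR.mulVec x) a = ∑ b, if G.Adj a b then x b else 0 := by
  simp [Matrix.mulVec, dotProduct, adjMatR]

lemma dotProduct_adjMatR_mulVec (x : V → ℝ) :
    x ⬝ᵥ G.adjMatR.mulVec x = ∑ a, ∑ b, if G.Adj a b then x a * x b else 0 := by
  simp only [dotProduct, adjMatR_mulVec, Finset.mul_sum, mul_ite, mul_zero]

lemma adjMatR_isHermitian : G.adjMatR.IsHermitian := by
  ext a b
  simp [adjMatR, G.adj_comm]

lemma isCompact_dotProduct_self_eq_one : IsCompact {x : V → ℝ | x ⬝ᵥ x = 1} := by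
  refine Metric.isCompact_of_isClosed_isBounded ?_ ?_
  · exact isClosed_eq (by unfold dotProduct; fun_prop) continuous_const
  · refine (Metric.isBounded_closedBall (x := (0 : V → ℝ)) (r := 1)).subset fun x hx => ?_
    rw [mem_closedBall_zero_iff, pi_norm_le_iff_of_nonneg zero_le_one]
    intro i
    have h : x i * x i ≤ x ⬝ᵥ x :=
      Finset.single_le_sum (f := fun i => x i * x i) (fun j _ => mul_self_nonneg _)
        (Finset.mem_univ i)
    rw [show x ⬝ᵥ x = 1 from hx] at h
    rw [Real.norm_eq_abs, abs_le_one_iff_mul_self_le_one]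
    exact h

lemma exists_rayleigh_max [Nonempty V] : ∃ (r : ℝ) (x : V → ℝ), x ≠ 0 ∧
    G.adjMatR.mulVec x = r • x ∧ (∀ y, y ⬝ᵥ G.adjMatR.mulVec y ≤ r * (y ⬝ᵥ y)) ∧
    ∀ y, y ⬝ᵥ G.adjMatR.mulVec y = r * (y ⬝ᵥ y) → G.adjMatR.mulVec y = r • y := by
  obtain ⟨x, hx, hmax⟩ := (isCompact_dotProduct_self_eq_one (V := V)).exists_isMaxOn
    ⟨Pi.single (Classical.arbitrary V) 1, by simp⟩
    (f := fun x : V → ℝ => x ⬝ᵥ G.adjMatR.mulVec x)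
    (by unfold Matrix.mulVec dotProduct; fun_prop)
  rw [Set.mem_ofPred_eq] at hx
  set r := x ⬝ᵥ G.adjMatR.mulVec x with hr
  have hle : ∀ y, y ⬝ᵥ G.adjMatR.mulVec y ≤ r * (y ⬝ᵥ y) := by
    intro y
    by_cases hy : y = 0
    · simp [hy]
    · have hpos : 0 < y ⬝ᵥ y :=
        lt_of_le_of_ne (Finset.sum_nonneg fun i _ => mul_self_nonneg _)
          (fun h => hy (dotProduct_self_eq_zero.1 h.symm))
      have hs : 0 < Real.sqrt (y ⬝ᵥ y) := Real.sqrt_pos.2 hpos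
      have hss := Real.mul_self_sqrt hpos.le
      have h1 : ((Real.sqrt (y ⬝ᵥ y))⁻¹ • y) ⬝ᵥ ((Real.sqrt (y ⬝ᵥ y))⁻¹ • y) = 1 := by
        rw [smul_dotProduct, dotProduct_smul, smul_eq_mul, smul_eq_mul, ← mul_assoc, ← mul_inv,
          hss, inv_mul_cancel₀ hpos.ne']
      have h2 : ((Real.sqrt (y ⬝ᵥ y))⁻¹ • y) ⬝ᵥ G.adjMatR.mulVec ((Real.sqrt (y ⬝ᵥ y))⁻¹ • y)
          ≤ r := hmax h1
      rw [Matrix.mulVec_smul, smul_dotProduct, dotProduct_smul, smul_eq_mul, smul_eq_mul,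
        ← mul_assoc, ← mul_inv, hss, inv_mul_le_iff₀ hpos] at h2
      linarith
  have heq : ∀ y, y ⬝ᵥ G.adjMatR.mulVec y = r * (y ⬝ᵥ y) → G.adjMatR.mulVec y = r • y := by
    have hform : ∀ y, y ⬝ᵥ (r • (1 : Matrix V V ℝ) - G.adjMatR).mulVec y =
        r * (y ⬝ᵥ y) - y ⬝ᵥ G.adjMatR.mulVec y := fun y => by
      rw [Matrix.sub_mulVec, Matrix.smul_mulVec, Matrix.one_mulVec, dotProduct_sub,
        dotProduct_smul, smul_eq_mul]
    have hpsd : (r • (1 : Matrix V V ℝ) - G.adjMatR).PosSemidef := by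
      refine .of_dotProduct_mulVec_nonneg ?_ fun y => ?_
      · exact (Matrix.isHermitian_one.smul (IsSelfAdjoint.all r)).sub G.adjMatR_isHermitian
      · rw [star_trivial, hform]
        linarith [hle y]
    intro y hy
    have h := (hpsd.dotProduct_mulVec_zero_iff y).1 (by rw [star_trivial, hform, hy, sub_self])
    rw [Matrix.sub_mulVec, Matrix.smul_mulVec, Matrix.one_mulVec, sub_eq_zero] at h
    exact h.symm
  refine ⟨r, x, ?_, heq x (by rw [hx, mul_one]), hle, heq⟩
  rintro rfl
  simp at hx

lemma exists_specRad [Nonempty V] : (∃ x : V → ℝ, x ≠ 0 ∧ G.adjMatR.mulVec x = G.specRad • x) ∧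
    (∀ y, y ⬝ᵥ G.adjMatR.mulVec y ≤ G.specRad * (y ⬝ᵥ y)) ∧
    ∀ y, y ⬝ᵥ G.adjMatR.mulVec y = G.specRad * (y ⬝ᵥ y) → G.adjMatR.mulVec y = G.specRad • y := by
  obtain ⟨r, x, hx, hxr, hle, heq⟩ := G.exists_rayleigh_max
  have hr : G.specRad = r := by
    refine IsGreatest.csSup_eq ⟨⟨x, hx, hxr⟩, ?_⟩
    rintro t ⟨y, hy, hyt⟩
    have hpos : 0 < y ⬝ᵥ y :=
      lt_of_le_of_ne (Finset.sum_nonneg fun i _ => mul_self_nonneg _)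
        (fun h => hy (dotProduct_self_eq_zero.1 h.symm))
    have h := hle y
    rw [hyt, dotProduct_smul, smul_eq_mul] at h
    exact le_of_mul_le_mul_right h hpos
  rw [hr]
  exact ⟨⟨x, hx, hxr⟩, hle, heq⟩

/-- A connected graph has a positive eigenvector for its spectral radius. -/
lemma Connected.exists_pos_eigenvector {G : SimpleGraph V} (hG : G.Connected) :
    ∃ x : V → ℝ, (∀ v, 0 < x v) ∧ G.adjMatR.mulVec x = G.specRad • x := by
  have := hG.nonempty
  obtain ⟨⟨y, hy, hyr⟩, hle, heq⟩ := G.exists_specRad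
  have hsq : (fun v => |y v|) ⬝ᵥ (fun v => |y v|) = y ⬝ᵥ y := by
    simp [dotProduct]
  have hx : G.adjMatR.mulVec (fun v => |y v|) = G.specRad • fun v => |y v| := by
    refine heq _ (le_antisymm (hle _) ?_)
    have h1 : y ⬝ᵥ G.adjMatR.mulVec y = G.specRad * (y ⬝ᵥ y) := by
      rw [hyr, dotProduct_smul, smul_eq_mul]
    rw [hsq, ← h1, dotProduct_adjMatR_mulVec, dotProduct_adjMatR_mulVec]
    refine Finset.sum_le_sum fun a _ => Finset.sum_le_sum fun b _ => ?_
    split_ifs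
    · rw [← abs_mul]; exact le_abs_self _
    · exact le_rfl
  refine ⟨_, fun v => abs_pos.2 fun hv => hy ?_, hx⟩
  have hstep : ∀ a b, G.Adj a b → y a = 0 → y b = 0 := by
    intro a b hab ha
    have h := congrFun hx a
    rw [adjMatR_mulVec, Pi.smul_apply, ha, abs_zero, smul_zero,
      Finset.sum_eq_zero_iff_of_nonneg fun c _ => by split_ifs <;> simp] at h
    simpa [hab] using h b (Finset.mem_univ b)
  have hwalk : ∀ {a b} (w : G.Walk a b), y a = 0 → y b = 0 := by
    intro a b w
    induction w with
    | nil => exact id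
    | cons h _ ih => exact fun ha => ih (hstep _ _ h ha)
  funext w
  obtain ⟨p⟩ := hG.preconnected v w
  exact hwalk p hv

variable {G} {W : Type*} [Fintype W] {H : SimpleGraph W}

lemma exists_eigenvector_of_iso (e : G ≃g H) {t : ℝ}
    (h : ∃ x : V → ℝ, x ≠ 0 ∧ G.adjMatR.mulVec x = t • x) :
    ∃ x : W → ℝ, x ≠ 0 ∧ H.adjMatR.mulVec x = t • x := by
  obtain ⟨x, hx, hxt⟩ := h
  refine ⟨x ∘ e.symm, fun h => hx ?_, ?_⟩
  · funext v
    simpa using congrFun h (e v)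
  · funext w
    rw [adjMatR_mulVec, Pi.smul_apply, Function.comp_apply, ← Pi.smul_apply, ← hxt,
      adjMatR_mulVec]
    refine (Fintype.sum_equiv e.toEquiv _ _ fun v => ?_).symm
    have : G.Adj (e.symm w) v ↔ H.Adj w (e v) := by
      rw [← e.map_adj_iff]; simp
    simp [this]

lemma specRad_congr (e : G ≃g H) : G.specRad = H.specRad := by
  unfold specRad
  congr 1
  ext t
  exact ⟨exists_eigenvector_of_iso e, exists_eigenvector_of_iso e.symm⟩

end SpectralRadius

section ClassSums

variable {V ι : Type*} [Fintype V] [Fintype ι]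

lemma sum_sq_class_sum (c : V → ι) (y : V → ℝ) :
    ∑ i, (∑ v, if c v = i then y v else 0) ^ 2 =
      (∑ a, ∑ b, if a ≠ b ∧ c a = c b then y a * y b else 0) + ∑ a, y a ^ 2 := by
  have h1 : ∑ i, (∑ v, if c v = i then y v else 0) ^ 2 =
      ∑ a, ∑ b, if c a = c b then y a * y b else 0 := by
    simp_rw [sq, Finset.sum_mul_sum]
    rw [Finset.sum_comm]
    refine Finset.sum_congr rfl fun a _ => ?_
    rw [Finset.sum_comm]
    refine Finset.sum_congr rfl fun b _ => ?_
    rw [Finset.sum_eq_single (c a)]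
    · simp [eq_comm]
    · intro i _ hi
      simp [hi.symm]
    · simp
  rw [h1, ← Finset.sum_add_distrib]
  refine Finset.sum_congr rfl fun a _ => ?_
  have h2 : y a ^ 2 = ∑ b, if a = b then y a * y b else 0 := by simp [sq]
  rw [h2, ← Finset.sum_add_distrib]
  refine Finset.sum_congr rfl fun b _ => ?_
  by_cases hab : a = b
  · simp [hab]
  · simp [hab]

/-- Moving weights into a heaviest class increases the sum of the products of pairs of weights in
the same class. -/
lemma sum_same_class_le {c c' : V → ι} {y : V → ℝ} (hy : ∀ v, 0 ≤ y v) {i₀ : ι}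
    (hmove : ∀ v, c' v = c v ∨ c' v = i₀)
    (hmax : ∀ i, (∑ v, if c v = i then y v else 0) ≤ ∑ v, if c v = i₀ then y v else 0) :
    (∑ a, ∑ b, if a ≠ b ∧ c a = c b then y a * y b else 0) ≤
        (∑ a, ∑ b, if a ≠ b ∧ c' a = c' b then y a * y b else 0) ∧
      ((∑ a, ∑ b, if a ≠ b ∧ c a = c b then y a * y b else 0) =
        (∑ a, ∑ b, if a ≠ b ∧ c' a = c' b then y a * y b else 0) →
        ∀ v, 0 < y v → c' v = c v) := by
  set s : ι → ℝ := fun i => ∑ v, if c v = i then y v else 0 with hs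
  set s' : ι → ℝ := fun i => ∑ v, if c' v = i then y v else 0 with hs'
  have h1 := sum_sq_class_sum c y
  have h2 := sum_sq_class_sum c' y
  change ∑ i, s i ^ 2 = _ at h1
  change ∑ i, s' i ^ 2 = _ at h2
  have hpair : ∀ d : V → ι, ∑ i, s i * (∑ v, if d v = i then y v else 0) =
      ∑ v, y v * s (d v) := by
    intro d
    simp_rw [Finset.mul_sum]
    rw [Finset.sum_comm]
    refine Finset.sum_congr rfl fun v _ => ?_
    simp [mul_comm]
  have h3 : ∑ i, s i * s i ≤ ∑ i, s i * s' i := by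
    rw [hpair c, hpair c']
    refine Finset.sum_le_sum fun v _ => mul_le_mul_of_nonneg_left ?_ (hy v)
    rcases hmove v with h | h
    · rw [h]
    · rw [h]; exact hmax _
  have h4 : ∑ i, s' i ^ 2 = ∑ i, s i ^ 2 + 2 * (∑ i, s i * s' i - ∑ i, s i * s i) +
      ∑ i, (s' i - s i) ^ 2 := by
    rw [← Finset.sum_sub_distrib, Finset.mul_sum, ← Finset.sum_add_distrib,
      ← Finset.sum_add_distrib]
    exact Finset.sum_congr rfl fun i _ => by ring
  have h5 : 0 ≤ ∑ i, (s' i - s i) ^ 2 := Finset.sum_nonneg fun i _ => sq_nonneg _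
  refine ⟨by linarith, fun heq v hv => ?_⟩
  have h6 : ∑ i, (s' i - s i) ^ 2 = 0 := by linarith
  have h7 := (Finset.sum_eq_zero_iff_of_nonneg fun i _ => sq_nonneg _).1 h6 i₀ (Finset.mem_univ _)
  have h8 : s' i₀ = s i₀ := by nlinarith
  have h9 : ∀ w ∈ Finset.univ, (if c w = i₀ then y w else 0) ≤ if c' w = i₀ then y w else 0 := by
    intro w _
    rcases hmove w with h | h
    · rw [h]
    · rw [if_pos h]
      split_ifs
      · exact le_rfl
      · exact hy w
  have h10 := (Finset.sum_eq_sum_iff_of_le h9).1 h8.symm v (Finset.mem_univ v)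
  rcases hmove v with h | h
  · exact h
  · rw [h] at h10 ⊢
    by_contra hne
    rw [if_neg (Ne.symm hne), if_pos rfl] at h10
    exact hv.ne h10

end ClassSums

section Windmill

lemma exists_equiv_of_card_fiber {α β : Type*} [Fintype α] [Fintype β] {f : α → ℕ} {g : β → ℕ}
    (i₀ : ℕ) (hcard : Fintype.card α = Fintype.card β)
    (hfib : ∀ i ≠ i₀, (Finset.univ.filter fun a => f a = i).card =
      (Finset.univ.filter fun b => g b = i).card) : ∃ e : α ≃ β, ∀ a, g (e a) = f a := by
  have hall : ∀ i, Nonempty ({a // f a = i} ≃ {b // g b = i}) := by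
    intro i
    rw [← Fintype.card_eq, Fintype.card_subtype, Fintype.card_subtype]
    by_cases hi : i = i₀
    · subst hi
      set s := insert i (Finset.univ.image f ∪ Finset.univ.image g) with hs
      have hf := Finset.card_eq_sum_card_fiberwise (s := Finset.univ) (t := s) (f := f)
        (fun a _ => by simp [hs])
      have hg := Finset.card_eq_sum_card_fiberwise (s := Finset.univ) (t := s) (f := g)
        (fun a _ => by simp [hs])
      have hi : i ∈ s := Finset.mem_insert_self _ _
      rw [← Finset.add_sum_erase _ _ hi] at hf hg
      rw [Finset.sum_congr rfl fun j hj => hfib j (Finset.ne_of_mem_erase hj)] at hf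
      rw [Finset.card_univ] at hf hg
      omega
    · exact hfib i hi
  refine ⟨(Equiv.sigmaFiberEquiv f).symm.trans
    ((Equiv.sigmaCongrRight fun i => (hall i).some).trans (Equiv.sigmaFiberEquiv g)), fun a => ?_⟩
  exact ((hall (f a)).some ⟨a, rfl⟩).2

/-- `0` for the center of `calG n k`, `1` for its large clique, and `i + 2` for its `i`-th
triangle. -/
def calGLabel (n k : ℕ) (j : Fin n) : ℕ :=
  if j.val = 0 then 0 else if j.val ≤ 2 * k - n + 1 then 1 else (j.val - (2 * k - n + 2)) / 2 + 2

lemma calG_adj_iff {n k : ℕ} (i j : Fin n) : (calG n k).Adj i j ↔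
    i ≠ j ∧ (calGLabel n k i = 0 ∨ calGLabel n k j = 0 ∨ calGLabel n k i = calGLabel n k j) := by
  rw [calG, fromRel_adj]
  refine and_congr_right fun _ => ?_
  unfold calGLabel
  grind

lemma card_calGLabel_eq_zero {n k : ℕ} (hn : 0 < n) :
    (Finset.univ.filter fun j => calGLabel n k j = 0).card = 1 := by
  rw [Finset.card_eq_one]
  refine ⟨⟨0, hn⟩, ?_⟩
  ext j
  simp only [Finset.mem_filter, Finset.mem_univ, true_and, Finset.mem_singleton, Fin.ext_iff]
  unfold calGLabel
  grind

lemma card_calGLabel_eq_add_two {n k i : ℕ} (hk : n < 2 * k) (hi : i < n - k - 1) :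
    (Finset.univ.filter fun j => calGLabel n k j = i + 2).card = 2 := by
  rw [Finset.card_eq_two]
  refine ⟨⟨2 * k - n + 2 + 2 * i, by omega⟩, ⟨2 * k - n + 2 + 2 * i + 1, by omega⟩,
    by simp [Fin.ext_iff], ?_⟩
  ext j
  simp only [Finset.mem_filter, Finset.mem_univ, true_and, Finset.mem_singleton, Fin.ext_iff,
    Finset.mem_insert]
  unfold calGLabel
  grind

lemma calGLabel_lt {n k : ℕ} (hk : n < 2 * k) (hk' : k < n) (j : Fin n) :
    calGLabel n k j < n - k - 1 + 2 := by
  have := j.2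
  unfold calGLabel
  split_ifs <;> omega

/-- A copy of `calG n k` centered at `u` whose triangles are given by the pairs `P i`. -/
lemma exists_iso_calG {V ι : Type*} [Fintype V] {n k : ℕ} (hk : n < 2 * k) (hk' : k < n)
    (hn : Fintype.card V = n) {u : V} {c : V → ι} {T : Finset ι} (hT : T.card = n - k - 1)
    {P : ι → Finset V} (hP : ∀ i ∈ T, (P i).card = 2 ∧ ∀ v ∈ P i, v ≠ u ∧ c v = i)
    {i₀ : ι} (hi₀ : i₀ ∉ T) :
    ∃ H : SimpleGraph V, Nonempty (H ≃g calG n k) ∧ ∀ a b, H.Adj a b ↔ a ≠ b ∧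
      (a = u ∨ b = u ∨ (if c a ∈ T ∧ a ∈ P (c a) then c a else i₀) =
        if c b ∈ T ∧ b ∈ P (c b) then c b else i₀) := by
  obtain ⟨idx, hinj, hlt, hsurj⟩ : ∃ idx : ι → ℕ, (∀ i ∈ T, ∀ j ∈ T, idx i = idx j → i = j) ∧
      (∀ i ∈ T, idx i < n - k - 1) ∧ ∀ m < n - k - 1, ∃ i ∈ T, idx i = m := by
    let e := T.equivFinOfCardEq hT
    refine ⟨fun i => if h : i ∈ T then (e ⟨i, h⟩ : ℕ) else 0, ?_, ?_, ?_⟩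
    · intro i hi j hj h
      simp only [dif_pos hi, dif_pos hj] at h
      simpa using e.injective (Fin.ext h)
    · intro i hi
      simp only [dif_pos hi]
      exact (e ⟨i, hi⟩).2
    · intro m hm
      refine ⟨e.symm ⟨m, hm⟩, (e.symm ⟨m, hm⟩).2, ?_⟩
      simp
  set L : V → ℕ := fun v =>
    if v = u then 0 else if c v ∈ T ∧ v ∈ P (c v) then idx (c v) + 2 else 1 with hL
  have hLlt : ∀ v, L v < n - k - 1 + 2 := by
    intro v
    simp only [hL]
    split_ifs with h1 h2
    · omega
    · have := hlt _ h2.1; omega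
    · omega
  have hfib : ∀ i ≠ 1, (Finset.univ.filter fun v => L v = i).card =
      (Finset.univ.filter fun j => calGLabel n k j = i).card := by
    intro i hi
    obtain rfl | ⟨m, rfl⟩ : i = 0 ∨ ∃ m, i = m + 2 := by
      rcases i with _ | _ | m
      · exact Or.inl rfl
      · exact absurd rfl hi
      · exact Or.inr ⟨m, rfl⟩
    · rw [card_calGLabel_eq_zero (by omega), Finset.card_eq_one]
      refine ⟨u, ?_⟩
      ext v
      simp only [hL, Finset.mem_filter, Finset.mem_univ, true_and, Finset.mem_singleton]
      split_ifs <;> simp [*]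
    · by_cases hm : m < n - k - 1
      · obtain ⟨i, hiT, rfl⟩ := hsurj m hm
        rw [card_calGLabel_eq_add_two hk hm]
        refine Eq.trans (congrArg Finset.card ?_) (hP i hiT).1
        ext v
        simp only [hL, Finset.mem_filter, Finset.mem_univ, true_and]
        constructor
        · intro h
          split_ifs at h with h1 h2
          · have := hinj _ h2.1 _ hiT (by omega)
            exact this ▸ h2.2
          · omega
        · intro hv
          obtain ⟨h1, h2⟩ := (hP i hiT).2 v hv
          simp [h1, h2, hv, hiT]
      · rw [Finset.card_eq_zero.2 (Finset.filter_eq_empty_iff.2 fun v _ => ?_),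
          Finset.card_eq_zero.2 (Finset.filter_eq_empty_iff.2 fun j _ => ?_)]
        · have := calGLabel_lt hk hk' j; omega
        · have := hLlt v; omega
  obtain ⟨e, he⟩ := exists_equiv_of_card_fiber 1 (by simpa using hn) hfib
  refine ⟨(calG n k).comap e, ⟨Iso.comap e _⟩, fun a b => ?_⟩
  have hL0 : ∀ v, L v = 0 ↔ v = u := by
    intro v
    simp only [hL]
    split_ifs <;> simp [*]
  rw [comap_adj, calG_adj_iff, he, he, hL0, hL0, e.injective.ne_iff]
  refine and_congr_right fun _ => ?_
  by_cases ha : a = u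
  · simp [ha]
  by_cases hb : b = u
  · simp [hb]
  simp only [ha, hb, false_or, hL, if_false]
  split_ifs with h1 h2 h2
  · exact ⟨fun h => hinj _ h1.1 _ h2.1 (by omega), fun h => by rw [h]⟩
  · exact iff_of_false (by omega) fun h => hi₀ (h ▸ h1.1)
  · exact iff_of_false (by omega) fun h => hi₀ (h ▸ h2.1)
  · simp

end Windmill

section Extremal

variable {V : Type*} [Fintype V] {G : SimpleGraph V} {u : V}

/-- A clique tree on `n` vertices has at least `n - Z(G)` blocks. -/
lemma RootedCliques.card_le_zeroForcingNumber_add (R : G.RootedCliques u) :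
    Fintype.card V ≤ G.zeroForcingNumber + ((Finset.univ.erase u).image R.cls).card := by
  obtain ⟨S, hS, hSG⟩ : ∃ S : Set V, S.ncard = G.zeroForcingNumber ∧ G.IsZeroForcingSet S :=
    Nat.sInf_mem (s := {n | ∃ S : Set V, S.ncard = n ∧ G.IsZeroForcingSet S})
      ⟨_, Set.univ, rfl, fun v => .init v (Set.mem_univ v)⟩
  rw [← hS]
  have hmem : ∀ {a}, a ≠ u → R.cls a ∈ (Finset.univ.erase u).image R.cls := fun {a} ha =>
    Finset.mem_image_of_mem _ (Finset.mem_erase.2 ⟨ha, Finset.mem_univ a⟩)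
  refine hSG.card_le_ncard_add_card _
    (fun C => {v | (v ≠ u ∧ R.cls v = C) ∨ ∃ a, a ≠ u ∧ R.cls a = C ∧ R.par a = v}) ?_ ?_
  · have key : ∀ {a b : V}, R.cls a = R.cls b → a ≠ u → G.Adj (R.par b) a := fun {a b} h ha => by
      rw [← R.par_congr h]
      exact R.par_adj ha
    rintro C - v (⟨hv, hvC⟩ | ⟨a, ha, haC, rfl⟩) w (⟨hw, hwC⟩ | ⟨b, hb, hbC, rfl⟩) hvw
    · exact R.adj_of_cls_eq (hvC.trans hwC.symm) hvw
    · exact (key (hvC.trans hbC.symm) hv).symm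
    · exact key (hwC.trans haC.symm) hw
    · exact absurd (R.par_congr (haC.trans hbC.symm)) hvw
  · intro a b hab
    rcases R.adj_cases hab with h | ⟨hb, h⟩ | ⟨ha, h⟩
    · have ha := R.ne_root h hab.ne
      exact ⟨_, hmem ha, Or.inl ⟨ha, rfl⟩, Or.inl ⟨R.ne_root h.symm hab.ne', h.symm⟩⟩
    · exact ⟨_, hmem hb, Or.inr ⟨b, hb, rfl, h⟩, Or.inl ⟨hb, rfl⟩⟩
    · exact ⟨_, hmem ha, Or.inl ⟨ha, rfl⟩, Or.inr ⟨a, ha, rfl, h⟩⟩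

/-- Attaching all classes of a rooted decomposition to a root of maximal weight does not decrease
the quadratic form of the adjacency matrix. -/
lemma RootedCliques.dotProduct_adjMatR_mulVec_le (R : G.RootedCliques u) {x : V → ℝ}
    (hx : ∀ v, 0 < x v) (hmax : ∀ v, x v ≤ x u) :
    x ⬝ᵥ G.adjMatR.mulVec x ≤
      (∑ a, ∑ b, if a ≠ b ∧ R.cls a = R.cls b then
        (if a = u then 0 else x a) * (if b = u then 0 else x b) else 0) +
      2 * (x u * ∑ v, if v = u then 0 else x v) := by
  set y : V → ℝ := fun v => if v = u then 0 else x v with hy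
  have hy0 : ∀ v, 0 ≤ y v := fun v => by
    simp only [hy]
    split_ifs
    · exact le_rfl
    · exact (hx v).le
  have hyu : ∀ {v}, v ≠ u → y v = x v := fun {v} hv => if_neg hv
  change _ ≤ (∑ a, ∑ b, if a ≠ b ∧ R.cls a = R.cls b then y a * y b else 0) +
    2 * (x u * ∑ v, y v)
  have hpar : (∑ a, ∑ b, if R.par b = a then x a * y b else 0) ≤ x u * ∑ v, y v := by
    rw [Finset.sum_comm, Finset.mul_sum]
    refine Finset.sum_le_sum fun b _ => ?_
    rw [Finset.sum_ite_eq]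
    simpa using mul_le_mul_of_nonneg_right (hmax (R.par b)) (hy0 b)
  have hpar' : (∑ a, ∑ b, if R.par a = b then y a * x b else 0) ≤ x u * ∑ v, y v := by
    rw [Finset.sum_comm]
    simpa only [mul_comm] using hpar
  have hterm : x ⬝ᵥ G.adjMatR.mulVec x ≤
      ∑ a, ∑ b, ((if a ≠ b ∧ R.cls a = R.cls b then y a * y b else 0) +
        (if R.par b = a then x a * y b else 0) + if R.par a = b then y a * x b else 0) := by
    rw [dotProduct_adjMatR_mulVec]
    refine Finset.sum_le_sum fun a _ => Finset.sum_le_sum fun b _ => ?_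
    have h1 : 0 ≤ if a ≠ b ∧ R.cls a = R.cls b then y a * y b else 0 := by
      split_ifs
      · exact mul_nonneg (hy0 a) (hy0 b)
      · exact le_rfl
    have h2 : 0 ≤ if R.par b = a then x a * y b else 0 := by
      split_ifs
      · exact mul_nonneg (hx a).le (hy0 b)
      · exact le_rfl
    have h3 : 0 ≤ if R.par a = b then y a * x b else 0 := by
      split_ifs
      · exact mul_nonneg (hy0 a) (hx b).le
      · exact le_rfl
    by_cases hab : G.Adj a b
    · rw [if_pos hab]
      rcases R.adj_cases hab with h | ⟨hb, h⟩ | ⟨ha, h⟩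
      · have e : (if a ≠ b ∧ R.cls a = R.cls b then y a * y b else 0) = x a * x b := by
          rw [if_pos ⟨hab.ne, h⟩, hyu (R.ne_root h hab.ne), hyu (R.ne_root h.symm hab.ne')]
        linarith
      · have e : (if R.par b = a then x a * y b else 0) = x a * x b := by rw [if_pos h, hyu hb]
        linarith
      · have e : (if R.par a = b then y a * x b else 0) = x a * x b := by rw [if_pos h, hyu ha]
        linarith
    · rw [if_neg hab]
      linarith
  simp only [Finset.sum_add_distrib] at hterm
  linarith

lemma dotProduct_adjMatR_mulVec_of_windmill {ι : Type*} {H : SimpleGraph V} {c : V → ι}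
    (hH : ∀ a b, H.Adj a b ↔ a ≠ b ∧ (a = u ∨ b = u ∨ c a = c b)) (x : V → ℝ) :
    x ⬝ᵥ H.adjMatR.mulVec x =
      (∑ a, ∑ b, if a ≠ b ∧ c a = c b then
        (if a = u then 0 else x a) * (if b = u then 0 else x b) else 0) +
      2 * (x u * ∑ v, if v = u then 0 else x v) := by
  have h1 : x u * (∑ v, if v = u then 0 else x v) =
      ∑ a, ∑ b, if a = u then x a * (if b = u then 0 else x b) else 0 := by
    rw [Finset.sum_comm, Finset.mul_sum]
    exact Finset.sum_congr rfl fun b _ => by rw [Finset.sum_ite_eq']; simp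
  have h2 : x u * (∑ v, if v = u then 0 else x v) =
      ∑ a, ∑ b, if b = u then (if a = u then 0 else x a) * x b else 0 := by
    rw [Finset.mul_sum]
    refine Finset.sum_congr rfl fun a _ => ?_
    rw [Finset.sum_ite_eq', if_pos (Finset.mem_univ u), mul_comm]
  rw [two_mul]
  nth_rewrite 1 [h1]
  rw [h2, dotProduct_adjMatR_mulVec]
  simp only [← Finset.sum_add_distrib]
  refine Finset.sum_congr rfl fun a _ => Finset.sum_congr rfl fun b _ => ?_
  simp only [hH]
  by_cases ha : a = u <;> by_cases hb : b = u
  · simp [ha, hb]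
  · simp [ha, hb, Ne.symm hb]
  · simp [ha, hb]
  · simp [ha, hb]

/-- The classes of a rooted decomposition can be rearranged into a copy of `calG n k` without
decreasing the quadratic form; if the form does not change, neither do the classes. -/
lemma RootedCliques.exists_calG (R : G.RootedCliques u) {n k : ℕ} (hk : n < 2 * k) (hk' : k < n)
    (hn : Fintype.card V = n) (hZ : G.zeroForcingNumber = k) {x : V → ℝ} (hx : ∀ v, 0 < x v)
    (hmax : ∀ v, x v ≤ x u) :
    ∃ H : SimpleGraph V, Nonempty (H ≃g calG n k) ∧
      x ⬝ᵥ G.adjMatR.mulVec x ≤ x ⬝ᵥ H.adjMatR.mulVec x ∧ (∀ v, v ≠ u → H.Adj u v) ∧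
      (x ⬝ᵥ G.adjMatR.mulVec x = x ⬝ᵥ H.adjMatR.mulVec x →
        (∀ v, v ≠ u → G.Adj u v) → G = H) := by
  set y : V → ℝ := fun v => if v = u then 0 else x v with hy
  have hy0 : ∀ v, 0 ≤ y v := fun v => by
    simp only [hy]
    split_ifs
    · exact le_rfl
    · exact (hx v).le
  have hypos : ∀ {v}, v ≠ u → 0 < y v := fun {v} hv => by simpa only [hy, if_neg hv] using hx v
  obtain ⟨C₀, -, hC₀⟩ := Finset.exists_max_image (Finset.univ : Finset (Set V))
    (fun C => ∑ v, if R.cls v = C then y v else 0) Finset.univ_nonempty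
  obtain ⟨T, hTsub, hT⟩ : ∃ T ⊆ ((Finset.univ.erase u).image R.cls).erase C₀,
      T.card = n - k - 1 := by
    refine Finset.exists_subset_card_eq ?_
    have h1 := R.card_le_zeroForcingNumber_add
    have h2 := Finset.pred_card_le_card_erase (s := (Finset.univ.erase u).image R.cls) (a := C₀)
    omega
  have hex : ∀ C, ∃ P : Finset V, C ∈ T → P.card = 2 ∧ ∀ v ∈ P, v ≠ u ∧ R.cls v = C := by
    intro C
    by_cases hC : C ∈ T
    · obtain ⟨a, ha, rfl⟩ := Finset.mem_image.1 (Finset.mem_of_mem_erase (hTsub hC))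
      have ha := Finset.ne_of_mem_erase ha
      obtain ⟨b, hba, hb⟩ := R.exists_twin ha
      refine ⟨{a, b}, fun _ => ⟨Finset.card_pair hba.symm, ?_⟩⟩
      simp only [Finset.mem_insert, Finset.mem_singleton, forall_eq_or_imp, forall_eq]
      exact ⟨⟨ha, trivial⟩, R.ne_root hb hba, hb⟩
    · exact ⟨∅, fun h => absurd h hC⟩
  choose P hP using hex
  have hC₀T : C₀ ∉ T := fun h => Finset.notMem_erase _ _ (hTsub h)
  obtain ⟨H, hiso, hH⟩ := exists_iso_calG hk hk' hn hT hP hC₀T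
  set c' : V → Set V := fun v => if R.cls v ∈ T ∧ v ∈ P (R.cls v) then R.cls v else C₀ with hc'
  replace hH : ∀ a b, H.Adj a b ↔ a ≠ b ∧ (a = u ∨ b = u ∨ c' a = c' b) := hH
  have hmove : ∀ v, c' v = R.cls v ∨ c' v = C₀ := fun v => by
    simp only [hc']
    split_ifs
    · exact Or.inl rfl
    · exact Or.inr rfl
  obtain ⟨hle, heq⟩ := sum_same_class_le hy0 hmove fun C => hC₀ C (Finset.mem_univ C)
  have hGle : x ⬝ᵥ G.adjMatR.mulVec x ≤
      (∑ a, ∑ b, if a ≠ b ∧ R.cls a = R.cls b then y a * y b else 0) + 2 * (x u * ∑ v, y v) :=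
    R.dotProduct_adjMatR_mulVec_le hx hmax
  have hHeq : x ⬝ᵥ H.adjMatR.mulVec x =
      (∑ a, ∑ b, if a ≠ b ∧ c' a = c' b then y a * y b else 0) + 2 * (x u * ∑ v, y v) :=
    dotProduct_adjMatR_mulVec_of_windmill hH x
  refine ⟨H, hiso, ?_, fun v hv => (hH u v).2 ⟨hv.symm, Or.inl rfl⟩, fun h hu => ?_⟩
  · exact (hGle.trans (add_le_add_left hle _)).trans_eq hHeq.symm
  · have hcls := heq (hle.antisymm
      (le_of_add_le_add_right ((hHeq.symm.trans h.symm).trans_le hGle)))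
    ext a b
    rw [R.adj_iff hu, hH]
    refine and_congr_right fun _ => ?_
    by_cases ha : a = u
    · simp [ha]
    by_cases hb : b = u
    · simp [hb]
    rw [hcls a (hypos ha), hcls b (hypos hb)]

end Extremal

end SimpleGraph

/-- **Main theorem.** Let `⌊n/2⌋ + 1 ≤ k ≤ n − 1` and let `G` be
any clique tree on `n` vertices with zero forcing number `k` in which every
block has at least 3 vertices.  Then `ρ(G) ≤ ρ(𝒢(n,k))`, with equality iff
`G ≅ 𝒢(n,k)`. -/
theorem specRad_le_extremal_cliqueTree {V : Type*} [Fintype V]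
    (n k : ℕ) (hk1 : n / 2 + 1 ≤ k) (hk2 : k ≤ n - 1)
    (hn : Fintype.card V = n)
    (G : SimpleGraph V) (hG : G.IsCliqueTree)
    (hsize : ∀ B : Set V, G.IsBlock B → 3 ≤ B.ncard)
    (hZ : G.zeroForcingNumber = k) :
    G.specRad ≤ (calG n k).specRad ∧
      (G.specRad = (calG n k).specRad ↔ Nonempty (G ≃g calG n k)) := by
  have : Nonempty V := hG.1.nonempty
  obtain ⟨x, hx, hxG⟩ := hG.1.exists_pos_eigenvector
  obtain ⟨u, -, hu⟩ := Finset.exists_max_image (Finset.univ : Finset V) x Finset.univ_nonempty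
  obtain ⟨R⟩ := hG.nonempty_rootedCliques hsize u
  obtain ⟨H, ⟨e⟩, hle, huH, heq⟩ := R.exists_calG (n := n) (k := k) (by omega) (by omega) hn hZ hx
    fun v => hu v (Finset.mem_univ v)
  obtain ⟨-, hray, hrayeq⟩ := H.exists_specRad
  have hGx : x ⬝ᵥ G.adjMatR.mulVec x = G.specRad * (x ⬝ᵥ x) := by
    rw [hxG, dotProduct_smul, smul_eq_mul]
  have hpos : 0 < x ⬝ᵥ x :=
    Finset.sum_pos (fun v _ => mul_pos (hx v) (hx v)) Finset.univ_nonempty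
  rw [← SimpleGraph.specRad_congr e]
  refine ⟨le_of_mul_le_mul_right (by linarith [hray x]) hpos, fun h => ?_, fun ⟨f⟩ => ?_⟩
  · have hH : x ⬝ᵥ H.adjMatR.mulVec x = H.specRad * (x ⬝ᵥ x) :=
      le_antisymm (hray x) (by rw [← h, ← hGx]; exact hle)
    have hxH := hrayeq x hH
    have hdom : ∀ v, v ≠ u → G.Adj u v := by
      have hsum := congrFun (hxG.trans ((congrArg (· • x) h).trans hxH.symm)) u
      rw [SimpleGraph.adjMatR_mulVec, SimpleGraph.adjMatR_mulVec] at hsum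
      have hterm : ∀ v ∈ Finset.univ,
          (if G.Adj u v then x v else 0) ≤ if H.Adj u v then x v else 0 := by
        intro v _
        by_cases hv : v = u
        · simp [hv]
        · rw [if_pos (huH v hv)]
          split_ifs
          · exact le_rfl
          · exact (hx v).le
      intro v hv
      have := (Finset.sum_eq_sum_iff_of_le hterm).1 hsum v (Finset.mem_univ v)
      by_contra hadj
      rw [if_neg hadj, if_pos (huH v hv)] at this
      exact (hx v).ne this
    have hGH := heq (by rw [hGx, hH, h]) hdom
    subst hGH
    exact ⟨e⟩
  · rw [SimpleGraph.specRad_congr f, SimpleGraph.specRad_congr e]
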